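/- Let Λ ∈ ℝ and let m, a, r : (−1, 1) → ℝ be differentiable functions such that for every s: Δ_r(r(s)) = 0 (with parameters m(s), a(s)), Ξ(s) := 1 + a(s)²Λ/3 > 0, and r(s)² + a(s)² > 0. Then for every s: (a/(r² + a²))·(d/ds)(maΞ^{−2}) + (Δ_r′(r)/(4Ξ(r² + a²)))·(d/ds)((r² + a²)/Ξ) = Ξ^{−1/2}·(d/ds)(mΞ^{−3/2}). -/

import Mathlib

/-- The Kerr–de Sitter horizon polynomial `Δ_r = (r² + a²)(1 − Λr²/3) − 2mr`. -/
noncomputable def Δr (Λ m a r : ℝ) : ℝ := (r ^ 2 + a ^ 2) * (1 - Λ / 3 * r ^ 2) - 2 * m * r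

/-- The derivative `Δ_r′ = 2r(1 − Λr²/3) − (2Λr/3)(r² + a²) − 2m` of `Δ_r` in `r`. -/
noncomputable def Δr' (Λ m a r : ℝ) : ℝ :=
  2 * r * (1 - Λ / 3 * r ^ 2) - 2 * Λ * r / 3 * (r ^ 2 + a ^ 2) - 2 * m

/-!
Write `R = r² + a²` and `u = 1 − Λr²/3`, so that the horizon equation is `R u = 2 m r`.
Differentiating it gives `Δ_r′ dr = 2 r dm − 2 a u da`, which removes `dr` from the left-hand side.
Both sides are then combinations of `dm` and `da`: the coefficients of `dm` are `Ξ⁻²` because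
`a² + r² = R`, and those of `da` are `−Λ m a Ξ⁻³` because `Ξ − u = Λ R / 3` and `R u = 2 m r`.
The argument is pointwise and linear in the differentials, so it gives an identity of one-forms on
any normed space of parameters: a form of the first law of black-hole mechanics.
-/

open Filter Topology

/-- The normalisation `Ξ = 1 + a²Λ/3` of the Kerr–de Sitter metric. -/
noncomputable def Ξ (Λ a : ℝ) : ℝ := 1 + a ^ 2 * Λ / 3

theorem horizon_da_coeff {Λ m a r : ℝ} (hΔ : Δr Λ m a r = 0) (hΞ : Ξ Λ a ≠ 0)
    (hra : r ^ 2 + a ^ 2 ≠ 0) :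
    a / (r ^ 2 + a ^ 2) * (m / Ξ Λ a ^ 2 - 4 / 3 * Λ * m * a ^ 2 / Ξ Λ a ^ 3)
      + Δr' Λ m a r / (4 * Ξ Λ a * (r ^ 2 + a ^ 2)) *
        (2 * a / Ξ Λ a - 2 / 3 * Λ * a * (r ^ 2 + a ^ 2) / Ξ Λ a ^ 2)
      - r / (2 * Ξ Λ a ^ 2 * (r ^ 2 + a ^ 2)) * (2 * a * (1 - Λ / 3 * r ^ 2))
      = -(Λ * m * a / Ξ Λ a ^ 3) := by
  have hcleared : m * Ξ Λ a - 4 / 3 * Λ * m * a ^ 2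
      + Δr' Λ m a r / 2 * (Ξ Λ a - Λ / 3 * (r ^ 2 + a ^ 2)) - r * Ξ Λ a * (1 - Λ / 3 * r ^ 2)
      = -(Λ * m * (r ^ 2 + a ^ 2)) := by
    unfold Δr at hΔ
    unfold Δr' Ξ
    linear_combination (-(2 / 3) * Λ * r) * hΔ
  field_simp
  linear_combination (12 * a) * hcleared

theorem horizon_first_law {V : Type*} [AddCommGroup V] [Module ℝ V] {Λ m a r : ℝ} {dm da dr : V}
    (hΔ : Δr Λ m a r = 0) (hΞ : Ξ Λ a ≠ 0) (hra : r ^ 2 + a ^ 2 ≠ 0)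
    (hdr : Δr' Λ m a r • dr = (2 * r) • dm - (2 * a * (1 - Λ / 3 * r ^ 2)) • da) :
    (a / (r ^ 2 + a ^ 2)) •
        ((a / Ξ Λ a ^ 2) • dm + (m / Ξ Λ a ^ 2 - 4 / 3 * Λ * m * a ^ 2 / Ξ Λ a ^ 3) • da)
      + (Δr' Λ m a r / (4 * Ξ Λ a * (r ^ 2 + a ^ 2))) •
        ((2 * r / Ξ Λ a) • dr
          + (2 * a / Ξ Λ a - 2 / 3 * Λ * a * (r ^ 2 + a ^ 2) / Ξ Λ a ^ 2) • da)
      = (Ξ Λ a ^ 2)⁻¹ • dm - (Λ * m * a / Ξ Λ a ^ 3) • da := by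
  -- The multiplier of `hdr` is the one that cancels `dr`; the remaining goals equate the
  -- coefficients of `dm`, `da` and `dr`.
  linear_combination (norm := match_scalars) (r / (2 * Ξ Λ a ^ 2 * (r ^ 2 + a ^ 2))) • hdr
  · field_simp
    ring
  · linear_combination horizon_da_coeff hΔ hΞ hra
  · field_simp
    ring

section Calculus

variable {𝕜 E : Type*} [NontriviallyNormedField 𝕜] [NormedAddCommGroup E] [NormedSpace 𝕜 E]
  {f g : E → 𝕜} {f' g' : E →L[𝕜] 𝕜} {s : E}

theorem hasFDerivAt_div (hf : HasFDerivAt f f' s) (hg : HasFDerivAt g g' s) (h0 : g s ≠ 0) :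
    HasFDerivAt (fun t => f t / g t) ((g s)⁻¹ • f' - (f s / g s ^ 2) • g') s := by
  simp only [div_eq_mul_inv]
  refine (hf.fun_mul ((hasDerivAt_inv h0).comp_hasFDerivAt s hg)).congr_fderiv ?_
  simp only [Function.comp_apply]
  module

theorem hasFDerivAt_sq_add_sq (hf : HasFDerivAt f f' s) (hg : HasFDerivAt g g' s) :
    HasFDerivAt (fun t => f t ^ 2 + g t ^ 2) ((2 * f s) • f' + (2 * g s) • g') s := by
  simpa using (hf.pow 2).fun_add (hg.pow 2)

end Calculus

section Differentials

variable {E : Type*} [NormedAddCommGroup E] [NormedSpace ℝ E] {Λ : ℝ} {m a r : E → ℝ}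
  {m' a' r' : E →L[ℝ] ℝ} {s : E}

theorem rpow_smul_fderiv_mul_rpow {f g : E → ℝ} {f' g' : E →L[ℝ] ℝ}
    (hf : HasFDerivAt f f' s) (hg : HasFDerivAt g g' s) (h0 : 0 < g s) (p q : ℝ) :
    g s ^ q • fderiv ℝ (fun t => f t * g t ^ p) s =
      g s ^ (q + p) • f' + (p * f s * g s ^ (q + p - 1)) • g' := by
  rw [(hf.fun_mul (hg.rpow_const (Or.inl h0.ne'))).fderiv, add_sub_assoc, Real.rpow_add h0,
    Real.rpow_add h0]
  module

theorem hasFDerivAt_Ξ (ha : HasFDerivAt a a' s) :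
    HasFDerivAt (fun t => Ξ Λ (a t)) ((2 * Λ / 3 * a s) • a') s := by
  simp only [Ξ, mul_div_assoc]
  refine (((ha.pow 2).mul_const (Λ / 3)).const_add 1).congr_fderiv ?_
  simp only [Nat.add_one_sub_one, pow_one]
  module

theorem hasFDerivAt_mul_div_Ξ_sq (hm : HasFDerivAt m m' s) (ha : HasFDerivAt a a' s)
    (hΞ : Ξ Λ (a s) ≠ 0) :
    HasFDerivAt (fun t => m t * a t / Ξ Λ (a t) ^ 2)
      ((a s / Ξ Λ (a s) ^ 2) • m' +
        (m s / Ξ Λ (a s) ^ 2 - 4 / 3 * Λ * m s * a s ^ 2 / Ξ Λ (a s) ^ 3) • a') s := by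
  refine (hasFDerivAt_div (hm.fun_mul ha) ((hasFDerivAt_Ξ ha).pow 2)
    (pow_ne_zero 2 hΞ)).congr_fderiv ?_
  match_scalars <;> field_simp
  ring

theorem hasFDerivAt_sq_add_sq_div_Ξ (hr : HasFDerivAt r r' s) (ha : HasFDerivAt a a' s)
    (hΞ : Ξ Λ (a s) ≠ 0) :
    HasFDerivAt (fun t => (r t ^ 2 + a t ^ 2) / Ξ Λ (a t))
      ((2 * r s / Ξ Λ (a s)) • r' +
        (2 * a s / Ξ Λ (a s) - 2 / 3 * Λ * a s * (r s ^ 2 + a s ^ 2) / Ξ Λ (a s) ^ 2) • a') s := by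
  refine (hasFDerivAt_div (hasFDerivAt_sq_add_sq hr ha) (hasFDerivAt_Ξ ha) hΞ).congr_fderiv ?_
  match_scalars <;> field_simp

theorem Ξ_rpow_smul_fderiv_mul_Ξ_rpow (hm : HasFDerivAt m m' s) (ha : HasFDerivAt a a' s)
    (hΞ : 0 < Ξ Λ (a s)) :
    Ξ Λ (a s) ^ (-(1 : ℝ) / 2) • fderiv ℝ (fun t => m t * Ξ Λ (a t) ^ (-(3 : ℝ) / 2)) s =
      (Ξ Λ (a s) ^ 2)⁻¹ • m' - (Λ * m s * a s / Ξ Λ (a s) ^ 3) • a' := by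
  have hpow₂ : Ξ Λ (a s) ^ (-(1 : ℝ) / 2 + -(3 : ℝ) / 2) = (Ξ Λ (a s) ^ 2)⁻¹ := by
    rw [← Real.rpow_natCast, ← Real.rpow_neg hΞ.le]
    norm_num
  have hpow₃ : Ξ Λ (a s) ^ (-(1 : ℝ) / 2 + -(3 : ℝ) / 2 - 1) = (Ξ Λ (a s) ^ 3)⁻¹ := by
    rw [← Real.rpow_natCast, ← Real.rpow_neg hΞ.le]
    norm_num
  rw [rpow_smul_fderiv_mul_rpow hm (hasFDerivAt_Ξ ha) hΞ, hpow₂, hpow₃]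
  module

theorem hasFDerivAt_Δr (hm : HasFDerivAt m m' s) (ha : HasFDerivAt a a' s)
    (hr : HasFDerivAt r r' s) :
    HasFDerivAt (fun t => Δr Λ (m t) (a t) (r t))
      (Δr' Λ (m s) (a s) (r s) • r' + (2 * a s * (1 - Λ / 3 * r s ^ 2)) • a'
        - (2 * r s) • m') s := by
  refine (((hasFDerivAt_sq_add_sq hr ha).fun_mul
    (((hr.pow 2).const_mul (Λ / 3)).const_sub 1)).fun_sub
    ((hm.const_mul 2).fun_mul hr)).congr_fderiv ?_
  simp only [Δr', Nat.add_one_sub_one, pow_one]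
  module

theorem Δr'_smul_eq_of_eventually_Δr_eq_zero (hm : HasFDerivAt m m' s) (ha : HasFDerivAt a a' s)
    (hr : HasFDerivAt r r' s) (hΔ : ∀ᶠ t in 𝓝 s, Δr Λ (m t) (a t) (r t) = 0) :
    Δr' Λ (m s) (a s) (r s) • r' =
      (2 * r s) • m' - (2 * a s * (1 - Λ / 3 * r s ^ 2)) • a' := by
  have hzero := (hasFDerivAt_Δr hm ha hr).unique
    ((hasFDerivAt_const (0 : ℝ) s).congr_of_eventuallyEq hΔ)
  linear_combination (norm := module) hzero

theorem sqrtXi_dt_is_hamiltonian_general (hm : DifferentiableAt ℝ m s)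
    (ha : DifferentiableAt ℝ a s) (hr : DifferentiableAt ℝ r s)
    (hΔ : ∀ᶠ t in 𝓝 s, Δr Λ (m t) (a t) (r t) = 0) (hΞ : 0 < Ξ Λ (a s))
    (hra : 0 < r s ^ 2 + a s ^ 2) :
    (a s / (r s ^ 2 + a s ^ 2)) • fderiv ℝ (fun t => m t * a t / Ξ Λ (a t) ^ 2) s
      + (Δr' Λ (m s) (a s) (r s) / (4 * Ξ Λ (a s) * (r s ^ 2 + a s ^ 2))) •
        fderiv ℝ (fun t => (r t ^ 2 + a t ^ 2) / Ξ Λ (a t)) s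
      = Ξ Λ (a s) ^ (-(1 : ℝ) / 2) •
        fderiv ℝ (fun t => m t * Ξ Λ (a t) ^ (-(3 : ℝ) / 2)) s := by
  have dm := hm.hasFDerivAt
  have da := ha.hasFDerivAt
  have dr := hr.hasFDerivAt
  rw [(hasFDerivAt_mul_div_Ξ_sq dm da hΞ.ne').fderiv,
    (hasFDerivAt_sq_add_sq_div_Ξ dr da hΞ.ne').fderiv, Ξ_rpow_smul_fderiv_mul_Ξ_rpow dm da hΞ]
  exact horizon_first_law hΔ.self_of_nhds hΞ.ne' hra.ne'
    (Δr'_smul_eq_of_eventually_Δr_eq_zero dm da dr hΔ)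

end Differentials

/-- For differentiable families `m, a, r : (−1,1) → ℝ` of Kerr–de Sitter
horizon data (`Δ_r(r) = 0`, `Ξ = 1 + a²Λ/3 > 0`, `r² + a² > 0`), one has the identity
`(a/(r²+a²)) d(maΞ⁻²)/ds + (Δ_r′/(4Ξ(r²+a²))) d((r²+a²)/Ξ)/ds = Ξ^{-1/2} d(mΞ^{-3/2})/ds`,
i.e. the flow of `√Ξ ∂_t` is generated by the Hamiltonian `m Ξ^{-3/2}`. -/
theorem sqrtXi_dt_is_hamiltonian (Λ : ℝ) (m a r : ℝ → ℝ)
    (hm : ∀ s ∈ Set.Ioo (-1 : ℝ) 1, DifferentiableAt ℝ m s)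
    (ha : ∀ s ∈ Set.Ioo (-1 : ℝ) 1, DifferentiableAt ℝ a s)
    (hr : ∀ s ∈ Set.Ioo (-1 : ℝ) 1, DifferentiableAt ℝ r s)
    (hΔ : ∀ s ∈ Set.Ioo (-1 : ℝ) 1, Δr Λ (m s) (a s) (r s) = 0)
    (hΞ : ∀ s ∈ Set.Ioo (-1 : ℝ) 1, 0 < 1 + (a s) ^ 2 * Λ / 3)
    (hra : ∀ s ∈ Set.Ioo (-1 : ℝ) 1, 0 < (r s) ^ 2 + (a s) ^ 2) :
    ∀ s ∈ Set.Ioo (-1 : ℝ) 1,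
      (a s / ((r s) ^ 2 + (a s) ^ 2)) *
          deriv (fun t => m t * a t / (1 + (a t) ^ 2 * Λ / 3) ^ 2) s
        + (Δr' Λ (m s) (a s) (r s) /
              (4 * (1 + (a s) ^ 2 * Λ / 3) * ((r s) ^ 2 + (a s) ^ 2))) *
          deriv (fun t => ((r t) ^ 2 + (a t) ^ 2) / (1 + (a t) ^ 2 * Λ / 3)) s
      = (1 + (a s) ^ 2 * Λ / 3) ^ (-(1 : ℝ) / 2) *
          deriv (fun t => m t * (1 + (a t) ^ 2 * Λ / 3) ^ (-(3 : ℝ) / 2)) s := by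
  intro s hs
  exact DFunLike.congr_fun (sqrtXi_dt_is_hamiltonian_general (hm s hs) (ha s hs) (hr s hs)
    (eventually_of_mem (isOpen_Ioo.mem_nhds hs) hΔ) (hΞ s hs) (hra s hs)) 1
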